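/- arXiv:1512.00379 — 2 statements merged into one kernel-verified Lean document; each statement's English description precedes it below -/
import Mathlib

section
/- The set {1/6, 7/12, 11/12} = {S₁(2/3), S₂S₁(2/3), S₂S₂(2/3)} is an optimal set of three-means for P, and the third quantization error is V₃ = 55/9792. -/
open MeasureTheory Set
open scoped ENNReal Classical

noncomputable section

/-- The similarity map `S₁(x) = x/4`. -/
def S1 (x : ℝ) : ℝ := x / 4

/-- The similarity map `S₂(x) = x/2 + 1/2`. -/
def S2 (x : ℝ) : ℝ := x / 2 + 1 / 2

/-- `P` satisfies the self-similarity relation `P = (1/4)·P∘S₁⁻¹ + (3/4)·P∘S₂⁻¹`. -/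
def SelfSimilar (P : Measure ℝ) : Prop :=
  P = (1/4 : ℝ≥0∞) • P.map S1 + (3/4 : ℝ≥0∞) • P.map S2

/-- For a word `σ` over `{1,2}` (encoded as `Fin 2`, `0 ↦ S₁`, `1 ↦ S₂`),
the composition `S_σ = S_{σ₁} ∘ ⋯ ∘ S_{σ_k}`. -/
def Sw : List (Fin 2) → ℝ → ℝ
  | [] => id
  | i :: σ => (if i = 0 then S1 else S2) ∘ Sw σ

/-- `p_σ`, the product of the probabilities `p₁ = 1/4`, `p₂ = 3/4` along `σ`. -/
def pw : List (Fin 2) → ℝ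
  | [] => 1
  | i :: σ => (if i = 0 then (1:ℝ)/4 else 3/4) * pw σ

/-- `s_σ`, the product of the contraction ratios `s₁ = 1/4`, `s₂ = 1/2` along `σ`. -/
def sw : List (Fin 2) → ℝ
  | [] => 1
  | i :: σ => (if i = 0 then (1:ℝ)/4 else 1/2) * sw σ

/-- `c(σ)`, the number of occurrences of the symbol `1` (encoded `0`) in `σ`. -/
def cnt (σ : List (Fin 2)) : ℕ := σ.count 0

/-- The cylinder interval `J_σ = S_σ([0,1])`. -/
def J (σ : List (Fin 2)) : Set ℝ := Sw σ '' Set.Icc 0 1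

/-- The distortion error `V(P;α) = ∫ min_{a ∈ α} (x-a)² dP`. -/
def distortion (P : Measure ℝ) (α : Finset ℝ) : ℝ :=
  ∫ x, sInf ((fun a => (x - a) ^ 2) '' (α : Set ℝ)) ∂P

/-- The `n`-th quantization error `V_n`. -/
def qError (P : Measure ℝ) (n : ℕ) : ℝ :=
  sInf {e | ∃ α : Finset ℝ, α.Nonempty ∧ α.card ≤ n ∧ e = distortion P α}

/-- `α` is an optimal set of `n`-means for `P`. -/
def IsOptimal (P : Measure ℝ) (n : ℕ) (α : Finset ℝ) : Prop :=
  α.Nonempty ∧ α.card ≤ n ∧ distortion P α = qError P n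

/-- `q_σ := P(J_σ) · λ(J_σ)²`. -/
def qnt (P : Measure ℝ) (σ : List (Fin 2)) : ℝ :=
  (P (J σ)).toReal * ((volume (J σ)).toReal) ^ 2

/-- The part of a measure outside `[0,1]` vanishes. -/
lemma ae_mem (P : Measure ℝ) [IsProbabilityMeasure P] (hP : SelfSimilar P) :
    ∀ᵐ x ∂P, x ∈ Icc (0:ℝ) 1 := by
  have m1 : Measurable S1 := by unfold S1; fun_prop
  have m2 : Measurable S2 := by unfold S2; fun_prop
  have hq : (1/4 : ℝ≥0∞) + 3/4 = 1 := by
    rw [ENNReal.div_add_div_same]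
    rw [show (1:ℝ≥0∞) + 3 = 4 by norm_num]
    exact ENNReal.div_self (by norm_num) (by norm_num)
  have step : ∀ t : ℝ, 0 ≤ t → P (Icc (-t) (1+t))ᶜ ≤ P (Icc (-(2*t)) (1+2*t))ᶜ := by
    intro t ht
    have hm : MeasurableSet (Icc (-t) (1+t))ᶜ := measurableSet_Icc.compl
    have e : P (Icc (-t) (1+t))ᶜ = (1/4 : ℝ≥0∞) * P (S1 ⁻¹' (Icc (-t) (1+t))ᶜ)
        + (3/4 : ℝ≥0∞) * P (S2 ⁻¹' (Icc (-t) (1+t))ᶜ) := by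
      conv_lhs => rw [show P = _ from hP]
      rw [Measure.add_apply, Measure.smul_apply, Measure.smul_apply, Measure.map_apply m1 hm,
        Measure.map_apply m2 hm, smul_eq_mul, smul_eq_mul]
    have h1 : S1 ⁻¹' (Icc (-t) (1+t))ᶜ ⊆ (Icc (-(2*t)) (1+2*t))ᶜ := by
      intro x hx hx'
      apply hx
      simp only [S1, mem_Icc] at hx' ⊢
      constructor <;> linarith [hx'.1, hx'.2]
    have h2 : S2 ⁻¹' (Icc (-t) (1+t))ᶜ ⊆ (Icc (-(2*t)) (1+2*t))ᶜ := by
      intro x hx hx'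
      apply hx
      simp only [S2, mem_Icc] at hx' ⊢
      constructor <;> linarith [hx'.1, hx'.2]
    rw [e]
    calc _ ≤ (1/4 : ℝ≥0∞) * P (Icc (-(2*t)) (1+2*t))ᶜ + (3/4 : ℝ≥0∞) * P (Icc (-(2*t)) (1+2*t))ᶜ := by
          gcongr
      _ = _ := by rw [← add_mul, hq, one_mul]
  have iter : ∀ (n : ℕ) (t : ℝ), 0 ≤ t →
      P (Icc (-t) (1+t))ᶜ ≤ P (Icc (-(2^n*t)) (1+2^n*t))ᶜ := by
    intro n
    induction n with
    | zero => intro t _; simp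
    | succ k ih =>
      intro t ht
      refine (step t ht).trans ?_
      have := ih (2*t) (by positivity)
      rwa [show (2:ℝ)^k*(2*t) = 2^(k+1)*t by ring] at this
  have zero : ∀ t : ℝ, 0 < t → P (Icc (-t) (1+t))ᶜ = 0 := by
    intro t ht
    have hanti : Antitone (fun n : ℕ => (Icc (-(2^n*t)) (1+2^n*t))ᶜ) := by
      intro m n hmn
      have h : (2:ℝ)^m * t ≤ 2^n*t := by
        have := pow_le_pow_right₀ (by norm_num : (1:ℝ) ≤ 2) hmn
        gcongr
      apply compl_subset_compl.2
      apply Icc_subset_Icc <;> linarith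
    have hlim := tendsto_measure_iInter_atTop (μ := P)
      (s := fun n : ℕ => (Icc (-(2^n*t)) (1+2^n*t))ᶜ)
      (fun n => measurableSet_Icc.compl.nullMeasurableSet) hanti ⟨0, measure_ne_top _ _⟩
    have hemp : (⋂ n : ℕ, (Icc (-(2^n*t)) (1+2^n*t))ᶜ) = ∅ := by
      ext x
      simp only [mem_iInter, mem_empty_iff_false, iff_false, not_forall]
      obtain ⟨n, hn⟩ := pow_unbounded_of_one_lt (|x|/t) (by norm_num : (1:ℝ) < 2)
      refine ⟨n, fun h => h ?_⟩
      rw [div_lt_iff₀ ht] at hn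
      have := abs_lt.1 hn
      constructor <;> linarith [this.1, this.2]
    rw [hemp, measure_empty] at hlim
    exact le_antisymm (ge_of_tendsto' hlim (fun n => iter n t ht.le)) bot_le
  have hall : ∀ᵐ x ∂P, ∀ n : ℕ, x ∈ Icc (-(1/((n:ℝ)+1))) (1+1/((n:ℝ)+1)) := by
    rw [ae_all_iff]
    intro n
    exact zero _ (by positivity)
  filter_upwards [hall] with x hx
  constructor
  · by_contra h
    push Not at h
    obtain ⟨n, hn⟩ := exists_nat_one_div_lt (neg_pos.2 h)
    linarith [(hx n).1]
  · by_contra h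
    push Not at h
    obtain ⟨n, hn⟩ := exists_nat_one_div_lt (sub_pos.2 h)
    linarith [(hx n).2]

lemma int_cont (P : Measure ℝ) [IsProbabilityMeasure P] (hP : SelfSimilar P)
    {f : ℝ → ℝ} (hf : Continuous f) : Integrable f P := by
  obtain ⟨C, hC⟩ := (isCompact_Icc (a := (0:ℝ)) (b := 1)).exists_bound_of_continuousOn hf.continuousOn
  refine Integrable.of_bound hf.aestronglyMeasurable C ?_
  filter_upwards [ae_mem P hP] with x hx using hC x hx

lemma int_mono (P : Measure ℝ) [IsProbabilityMeasure P] (hP : SelfSimilar P)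
    {f g : ℝ → ℝ} (hf : Continuous f) (hg : Continuous g)
    (h : ∀ x, 0 ≤ x → x ≤ 1 → f x ≤ g x) : ∫ x, f x ∂P ≤ ∫ x, g x ∂P := by
  apply integral_mono_ae (int_cont P hP hf) (int_cont P hP hg)
  filter_upwards [ae_mem P hP] with x hx using h x hx.1 hx.2

lemma int_rec (P : Measure ℝ) [IsProbabilityMeasure P] (hP : SelfSimilar P)
    {f : ℝ → ℝ} (hf : Continuous f) :
    ∫ x, f x ∂P = 1/4 * ∫ x, f (x/4) ∂P + 3/4 * ∫ x, f (x/2+1/2) ∂P := by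
  have m1 : Measurable S1 := by unfold S1; fun_prop
  have m2 : Measurable S2 := by unfold S2; fun_prop
  have hi := int_cont P hP hf
  rw [show P = _ from hP, integrable_add_measure] at hi
  conv_lhs => rw [show P = _ from hP]
  rw [integral_add_measure hi.1 hi.2, integral_smul_measure, integral_smul_measure,
    integral_map m1.aemeasurable hf.aestronglyMeasurable,
    integral_map m2.aemeasurable hf.aestronglyMeasurable]
  simp [S1, S2]

lemma mean_eq (P : Measure ℝ) [IsProbabilityMeasure P] (hP : SelfSimilar P) :
    ∫ x, x ∂P = 2/3 := by
  have h := int_rec P hP (f := fun x => x) continuous_id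
  rw [integral_add (int_cont P hP (by fun_prop)) (int_cont P hP (by fun_prop)),
    integral_div, integral_div] at h
  simp at h
  linarith

lemma quad (P : Measure ℝ) [IsProbabilityMeasure P] (hP : SelfSimilar P) (p q r : ℝ) :
    ∫ x, (p * x^2 + q * x + r) ∂P = p * (∫ x, x^2 ∂P) + q * (2/3) + r := by
  rw [integral_add (int_cont P hP (by fun_prop)) (int_cont P hP (by fun_prop)),
    integral_add (int_cont P hP (by fun_prop)) (int_cont P hP (by fun_prop)),
    integral_const_mul, integral_const_mul, mean_eq P hP]
  simp

lemma sq_eq (P : Measure ℝ) [IsProbabilityMeasure P] (hP : SelfSimilar P) :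
    ∫ x, x^2 ∂P = 28/51 := by
  have h := int_rec P hP (f := fun x => x^2) (by fun_prop)
  have e1 := quad P hP (1/16) 0 0
  have e2 := quad P hP (1/4) (1/2) (1/4)
  have f1 : (fun x : ℝ => (x/4)^2) = fun x => 1/16 * x^2 + 0 * x + 0 := by ext; ring
  have f2 : (fun x : ℝ => (x/2+1/2)^2) = fun x => 1/4 * x^2 + 1/2 * x + 1/4 := by ext; ring
  rw [f1, f2, e1, e2] at h
  linarith

/-- Second moment of an affine image. -/
lemma aff (P : Measure ℝ) [IsProbabilityMeasure P] (hP : SelfSimilar P) (s d : ℝ) :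
    ∫ x, (s * x + d)^2 ∂P = s^2 * (16/153) + (s * (2/3) + d)^2 := by
  have f : (fun x : ℝ => (s*x+d)^2) = fun x => s^2 * x^2 + (2*s*d) * x + d^2 := by ext; ring
  rw [f, quad P hP, sq_eq P hP]; ring

lemma kbound (P : Measure ℝ) [IsProbabilityMeasure P] (hP : SelfSimilar P) :
    ∀ (n : ℕ) (t : ℝ), 0 ≤ t → ∫ x, max (t - x) 0 ∂P ≤ 3/8*t^2 + (1/2)^n := by
  intro n
  have lin : ∀ t : ℝ, 1 ≤ t → ∫ x, max (t - x) 0 ∂P ≤ t - 2/3 := by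
    intro t ht
    have h := int_mono P hP (f := fun x => max (t-x) 0) (g := fun x => 0 * x^2 + (-1)*x + t)
      (by fun_prop) (by fun_prop) (fun x h0 h1 => by
        apply max_le <;> linarith)
    rw [quad P hP] at h
    linarith
  induction n with
  | zero =>
    intro t ht
    have h := int_mono P hP (f := fun x => max (t-x) 0) (g := fun x => t)
      (by fun_prop) (by fun_prop) (fun x h0 h1 => by
        apply max_le <;> linarith)
    simp at h
    norm_num
    nlinarith [sq_nonneg (t-4/3)]
  | succ k ih =>
    intro t ht
    have hk : (0:ℝ) ≤ (1/2)^k := by positivity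
    have hr := int_rec P hP (f := fun x => max (t-x) 0) (by fun_prop)
    have e1 : ∫ x, max (t - x/4) 0 ∂P = 1/4 * ∫ x, max (4*t - x) 0 ∂P := by
      rw [← integral_const_mul]; congr 1; ext x
      rw [mul_max_of_nonneg _ _ (by norm_num)]; congr 1 <;> ring
    have e2 : ∫ x, max (t - (x/2+1/2)) 0 ∂P = 1/2 * ∫ x, max ((2*t-1) - x) 0 ∂P := by
      rw [← integral_const_mul]; congr 1; ext x
      rw [mul_max_of_nonneg _ _ (by norm_num)]; congr 1 <;> ring
    rw [e1, e2] at hr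
    have z : ∀ s : ℝ, s ≤ 0 → ∫ x, max (s - x) 0 ∂P ≤ 0 := by
      intro s hs
      have h := int_mono P hP (f := fun x => max (s-x) 0) (g := fun x => 0)
        (by fun_prop) (by fun_prop) (fun x h0 h1 => by
          apply max_le <;> linarith)
      simpa using h
    rw [pow_succ (1/2:ℝ) k]
    rcases le_total t (1/4) with h1 | h1
    · have := ih (4*t) (by linarith)
      have := z (2*t-1) (by linarith)
      rw [hr]; nlinarith
    rcases le_total t (1/2) with h2 | h2
    · have := lin (4*t) (by linarith)
      have := z (2*t-1) (by linarith)
      rw [hr]; nlinarith [sq_nonneg (t-1/3)]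
    rcases le_total t 1 with h3 | h3
    · have := lin (4*t) (by linarith)
      have := ih (2*t-1) (by linarith)
      rw [hr]; nlinarith
    · have := lin t h3
      nlinarith [sq_nonneg (t-4/3)]

lemma kb (P : Measure ℝ) [IsProbabilityMeasure P] (hP : SelfSimilar P) (t : ℝ) (ht : 0 ≤ t) :
    ∫ x, max (t - x) 0 ∂P ≤ 3/8*t^2 := by
  have hl : Filter.Tendsto (fun n : ℕ => 3/8*t^2 + (1/2:ℝ)^n) Filter.atTop (nhds (3/8*t^2 + 0)) :=
    (tendsto_pow_atTop_nhds_zero_of_lt_one (by norm_num) (by norm_num)).const_add _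
  rw [add_zero] at hl
  exact ge_of_tendsto' hl (fun n => kbound P hP n t ht)

lemma sq_le_sq_of {x y : ℝ} (h1 : x ≤ y) (h2 : -y ≤ x) : x^2 ≤ y^2 := by nlinarith

lemma poly_key (a b : ℝ) (h2 : 1 ≤ a + b) (hb : b ≤ 1) :
    0 ≤ 1/4*(1/6-a)^2 + 3/4*((5/6-b)^2 - (b-a)*(3/8*(a+b-1)^2)) := by
  obtain ⟨p, rfl⟩ : ∃ p, a = 1/6 + p/2 := ⟨2*(a-1/6), by ring⟩
  obtain ⟨q, rfl⟩ : ∃ q, b = 5/6 + q/2 := ⟨2*(b-5/6), by ring⟩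
  have hpq : 0 ≤ p + q := by linarith
  have hq : q ≤ 1/3 := by linarith
  have : 0 ≤ (p-3*q)^2/4 + 9/16*((p-q)*(p+q)^2) := by
    rcases le_total q p with h | h
    · have : 0 ≤ (p-q)*(p+q)^2 := mul_nonneg (by linarith) (sq_nonneg _)
      linarith [sq_nonneg (p-3*q)]
    · have h5 : (p+q)^2 ≤ (p-3*q)^2 := by
        rw [show (p-3*q)^2 = (3*q-p)^2 by ring]
        exact sq_le_sq_of (by linarith) (by linarith)
      rcases le_total (q-p) (4/9) with h6 | h6
      · have h7 := mul_le_mul_of_nonneg_right h6 (sq_nonneg (p+q))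
        have h8 : (p-q)*(p+q)^2 = -((q-p)*(p+q)^2) := by ring
        rw [h8]; linarith
      · have h7 : (p+q)^2 ≤ (2/9)^2 := sq_le_sq_of (by linarith) (by linarith)
        have h8 : q - p ≤ 2/3 := by linarith
        have h9 : (4/9)^2 ≤ (p-3*q)^2 := by
          rw [show (p-3*q)^2 = (3*q-p)^2 by ring]
          exact sq_le_sq_of (by linarith) (by linarith)
        have h10 := mul_le_mul_of_nonneg_right h8 (sq_nonneg (p+q))
        have h11 : (p-q)*(p+q)^2 = -((q-p)*(p+q)^2) := by ring
        rw [h11]; linarith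
  have e : 1/4*(1/6-(1/6+p/2))^2 + 3/4*((5/6-(5/6+q/2))^2
      - ((5/6+q/2)-(1/6+p/2))*(3/8*((1/6+p/2)+(5/6+q/2)-1)^2))
      = 1/16*((p-3*q)^2/4 + 9/16*((p-q)*(p+q)^2)) := by ring
  rw [e]; linarith

/-- Two-point lower bound, ordered points in `[0,1]`. -/
lemma two_aux (P : Measure ℝ) [IsProbabilityMeasure P] (hP : SelfSimilar P) (a b : ℝ)
    (ha : 0 ≤ a) (hab : a ≤ b) (hb : b ≤ 1) :
    13/612 ≤ ∫ x, min ((x-a)^2) ((x-b)^2) ∂P := by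
  have hr := int_rec P hP (f := fun x => min ((x-a)^2) ((x-b)^2)) (by fun_prop)
  rw [hr]
  have n1 : 0 ≤ ∫ x, min ((x/4-a)^2) ((x/4-b)^2) ∂P := integral_nonneg (fun x => by positivity)
  rcases le_total (a+b) (1/2) with h1 | h1
  · have l2 := int_mono P hP (f := fun x => (1/2*x+(1/2-b))^2)
      (g := fun x => min ((x/2+1/2-a)^2) ((x/2+1/2-b)^2)) (by fun_prop) (by fun_prop)
      (fun x h0 h1 => by
        apply le_min
        · nlinarith
        · apply le_of_eq; ring)
    rw [aff P hP] at l2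
    nlinarith
  · rcases le_total (a+b) 1 with h2 | h2
    · have l2 := int_mono P hP (f := fun x => (1/2*x+(1/2-b))^2)
        (g := fun x => min ((x/2+1/2-a)^2) ((x/2+1/2-b)^2)) (by fun_prop) (by fun_prop)
        (fun x h0 h1 => by
          apply le_min
          · nlinarith
          · apply le_of_eq; ring)
      have l1 := int_mono P hP (f := fun x => (1/4*x+(-a))^2)
        (g := fun x => min ((x/4-a)^2) ((x/4-b)^2)) (by fun_prop) (by fun_prop)
        (fun x h0 h1 => by
          apply le_min
          · apply le_of_eq; ring
          · nlinarith)
      rw [aff P hP] at l1 l2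
      nlinarith [sq_nonneg (1/4*(2/3)+(-a)), sq_nonneg (1/2*(2/3)+(1/2-b))]
    · have l1 := int_mono P hP (f := fun x => (1/4*x+(-a))^2)
        (g := fun x => min ((x/4-a)^2) ((x/4-b)^2)) (by fun_prop) (by fun_prop)
        (fun x h0 h1 => by
          apply le_min
          · apply le_of_eq; ring
          · nlinarith)
      rw [aff P hP] at l1
      have e : ∫ x, min ((x/2+1/2-a)^2) ((x/2+1/2-b)^2) ∂P
          = ∫ x, ((1/2*x+(1/2-b))^2 - (b-a) * max (a+b-1-x) 0) ∂P := by
        congr 1; ext x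
        rcases le_total (a+b-1-x) 0 with h | h
        · rw [max_eq_right h, min_eq_right (by nlinarith)]; ring
        · rw [max_eq_left h, min_eq_left (by nlinarith)]; ring
      rw [integral_sub (int_cont P hP (by fun_prop)) (int_cont P hP (by fun_prop)),
        integral_const_mul, aff P hP] at e
      have k := kb P hP (a+b-1) (by linarith)
      have k2 := mul_le_mul_of_nonneg_left k (by linarith : 0 ≤ b-a)
      -- final polynomial inequality
      have key := poly_key a b h2 hb
      rw [e]
      linarith

def cl (a : ℝ) : ℝ := max 0 (min a 1)

lemma cl_nonneg (a : ℝ) : 0 ≤ cl a := le_max_left _ _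
lemma cl_le (a : ℝ) : cl a ≤ 1 := max_le zero_le_one (min_le_right _ _)
lemma cl_mono {a b : ℝ} (h : a ≤ b) : cl a ≤ cl b := by unfold cl; gcongr
lemma cl_sq (a x : ℝ) (h0 : 0 ≤ x) (h1 : x ≤ 1) : (x - cl a)^2 ≤ (x-a)^2 := by
  unfold cl
  rcases le_total a 1 with h | h
  · rw [min_eq_left h]
    rcases le_total 0 a with h' | h'
    · rw [max_eq_right h']
    · rw [max_eq_left h']; nlinarith
  · rw [min_eq_right h, max_eq_right zero_le_one]; nlinarith

lemma two (P : Measure ℝ) [IsProbabilityMeasure P] (hP : SelfSimilar P) (a b : ℝ)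
    (hab : a ≤ b) : 13/612 ≤ ∫ x, min ((x-a)^2) ((x-b)^2) ∂P := by
  refine (two_aux P hP (cl a) (cl b) (cl_nonneg a) (cl_mono hab) (cl_le b)).trans ?_
  apply int_mono P hP (by fun_prop) (by fun_prop)
  intro x h0 h1
  exact min_le_min (cl_sq a x h0 h1) (cl_sq b x h0 h1)

/-- Lower bound with one point at `0`. -/
lemma two_zero (P : Measure ℝ) [IsProbabilityMeasure P] (hP : SelfSimilar P) (c : ℝ)
    (hc : c ≤ 1) : 28/3264 + 3/153 ≤ ∫ x, min (x^2) ((x-c)^2) ∂P := by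
  have hr := int_rec P hP (f := fun x => min (x^2) ((x-c)^2)) (by fun_prop)
  rw [hr]
  have n1 : 0 ≤ ∫ x, min ((x/4)^2) ((x/4-c)^2) ∂P := integral_nonneg (fun x => by positivity)
  rcases le_total c 0 with h0 | h0
  · have l2 := int_mono P hP (f := fun x => (1/2*x+1/2)^2)
      (g := fun x => min ((x/2+1/2)^2) ((x/2+1/2-c)^2)) (by fun_prop) (by fun_prop)
      (fun x h0 h1 => by
        apply le_min
        · apply le_of_eq; ring
        · nlinarith)
    rw [aff P hP] at l2
    nlinarith
  have l2 := int_mono P hP (f := fun x => (1/2*x+(1/2-c))^2)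
    (g := fun x => min ((x/2+1/2)^2) ((x/2+1/2-c)^2)) (by fun_prop) (by fun_prop)
    (fun x h0 h1 => by
      apply le_min
      · nlinarith
      · apply le_of_eq; ring)
  rw [aff P hP] at l2
  rcases le_total c (1/2) with h1 | h1
  · nlinarith
  · have l1 := int_mono P hP (f := fun x => (1/4*x+0)^2)
      (g := fun x => min ((x/4)^2) ((x/4-c)^2)) (by fun_prop) (by fun_prop)
      (fun x h0 h1 => by
        apply le_min
        · apply le_of_eq; ring
        · nlinarith)
    rw [aff P hP] at l1
    nlinarith [sq_nonneg (1/2*(2/3)+(1/2-c))]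

lemma three_aux (P : Measure ℝ) [IsProbabilityMeasure P] (hP : SelfSimilar P) (a b c : ℝ)
    (ha : 0 ≤ a) (hab : a ≤ b) (hbc : b ≤ c) (hc : c ≤ 1) :
    55/9792 ≤ ∫ x, min ((x-a)^2) (min ((x-b)^2) ((x-c)^2)) ∂P := by
  have hr := int_rec P hP (f := fun x => min ((x-a)^2) (min ((x-b)^2) ((x-c)^2))) (by fun_prop)
  rw [hr]
  have n1 : 0 ≤ ∫ x, min ((x/4-a)^2) (min ((x/4-b)^2) ((x/4-c)^2)) ∂P :=
    integral_nonneg (fun x => by positivity)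
  rcases le_total (b+c) 1 with hv | hv
  · have l2 := int_mono P hP (f := fun x => (1/2*x+(1/2-c))^2)
      (g := fun x => min ((x/2+1/2-a)^2) (min ((x/2+1/2-b)^2) ((x/2+1/2-c)^2)))
      (by fun_prop) (by fun_prop)
      (fun x h0 h1 => by
        refine le_min ?_ (le_min ?_ ?_)
        · nlinarith
        · nlinarith
        · apply le_of_eq; ring)
    rw [aff P hP] at l2
    nlinarith [sq_nonneg (1/2*(2/3)+(1/2-c))]
  rcases le_total (a+b) (1/2) with hu | hu
  · -- two points on the left piece
    have l1 := int_mono P hP (f := fun x => 1/16 * min ((x-4*a)^2) ((x-4*b)^2))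
      (g := fun x => min ((x/4-a)^2) (min ((x/4-b)^2) ((x/4-c)^2)))
      (by fun_prop) (by fun_prop)
      (fun x h0 h1 => by
        refine le_min ?_ (le_min ?_ ?_)
        · linarith [min_le_left ((x-4*a)^2) ((x-4*b)^2)]
        · linarith [min_le_right ((x-4*a)^2) ((x-4*b)^2)]
        · have := min_le_right ((x-4*a)^2) ((x-4*b)^2)
          nlinarith)
    rw [integral_const_mul] at l1
    have t1 := two P hP (4*a) (4*b) (by linarith)
    have l2 := int_mono P hP (f := fun x => 1/4 * min (x^2) ((x-(2*c-1))^2))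
      (g := fun x => min ((x/2+1/2-a)^2) (min ((x/2+1/2-b)^2) ((x/2+1/2-c)^2)))
      (by fun_prop) (by fun_prop)
      (fun x h0 h1 => by
        have k1 := min_le_left (x^2) ((x-(2*c-1))^2)
        have k2 := min_le_right (x^2) ((x-(2*c-1))^2)
        refine le_min ?_ (le_min ?_ ?_)
        · nlinarith
        · nlinarith
        · linarith)
    rw [integral_const_mul] at l2
    have t2 := two_zero P hP (2*c-1) (by linarith)
    linarith
  have l1 := int_mono P hP (f := fun x => (1/4*x+(-a))^2)
    (g := fun x => min ((x/4-a)^2) (min ((x/4-b)^2) ((x/4-c)^2)))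
    (by fun_prop) (by fun_prop)
    (fun x h0 h1 => by
      refine le_min ?_ (le_min ?_ ?_)
      · apply le_of_eq; ring
      · nlinarith
      · nlinarith)
  rw [aff P hP] at l1
  rcases le_total (a+b) 1 with hu2 | hu2
  · have l2 := int_mono P hP (f := fun x => 1/4 * min ((x-(2*b-1))^2) ((x-(2*c-1))^2))
      (g := fun x => min ((x/2+1/2-a)^2) (min ((x/2+1/2-b)^2) ((x/2+1/2-c)^2)))
      (by fun_prop) (by fun_prop)
      (fun x h0 h1 => by
        have k1 := min_le_left ((x-(2*b-1))^2) ((x-(2*c-1))^2)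
        have k2 := min_le_right ((x-(2*b-1))^2) ((x-(2*c-1))^2)
        refine le_min ?_ (le_min ?_ ?_)
        · nlinarith
        · linarith
        · linarith)
    rw [integral_const_mul] at l2
    have t2 := two P hP (2*b-1) (2*c-1) (by linarith)
    nlinarith [sq_nonneg (1/4*(2/3)+(-a))]
  · have n2 : 0 ≤ ∫ x, min ((x/2+1/2-a)^2) (min ((x/2+1/2-b)^2) ((x/2+1/2-c)^2)) ∂P :=
      integral_nonneg (fun x => by positivity)
    rcases le_total a (3/8) with h3 | h3
    · have hr2 := int_rec P hP (f := fun x => min ((x/2+1/2-a)^2) (min ((x/2+1/2-b)^2) ((x/2+1/2-c)^2)))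
        (by fun_prop)
      have n3 : 0 ≤ ∫ x, min (((x/2+1/2)/2+1/2-a)^2)
          (min (((x/2+1/2)/2+1/2-b)^2) (((x/2+1/2)/2+1/2-c)^2)) ∂P :=
        integral_nonneg (fun x => by positivity)
      have l2 := int_mono P hP (f := fun x => (-1/8*x+(1/2-a))^2)
        (g := fun x => min ((x/4/2+1/2-a)^2) (min ((x/4/2+1/2-b)^2) ((x/4/2+1/2-c)^2)))
        (by fun_prop) (by fun_prop)
        (fun x h0 h1 => by
          refine le_min ?_ (le_min ?_ ?_)
          · nlinarith
          · nlinarith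
          · nlinarith)
      rw [aff P hP] at l2
      rw [hr2]
      nlinarith [sq_nonneg (a-23/84)]
    · nlinarith

lemma three (P : Measure ℝ) [IsProbabilityMeasure P] (hP : SelfSimilar P) (a b c : ℝ)
    (hab : a ≤ b) (hbc : b ≤ c) :
    55/9792 ≤ ∫ x, min ((x-a)^2) (min ((x-b)^2) ((x-c)^2)) ∂P := by
  refine (three_aux P hP (cl a) (cl b) (cl c) (cl_nonneg a) (cl_mono hab) (cl_mono hbc)
    (cl_le c)).trans ?_
  apply int_mono P hP (by fun_prop) (by fun_prop)
  intro x h0 h1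
  exact min_le_min (cl_sq a x h0 h1) (min_le_min (cl_sq b x h0 h1) (cl_sq c x h0 h1))

lemma inf_cont (α : Finset ℝ) (h : α.Nonempty) :
    Continuous (fun x : ℝ => sInf ((fun a => (x - a) ^ 2) '' (α : Set ℝ))) := by
  have : (fun x : ℝ => sInf ((fun a => (x - a) ^ 2) '' (α : Set ℝ)))
      = fun x => α.inf' h (fun a => (x-a)^2) := by
    ext x; rw [Finset.inf'_eq_csInf_image]
  rw [this]
  apply Continuous.finset_inf'_apply
  intro i _
  fun_prop

lemma lower (P : Measure ℝ) [IsProbabilityMeasure P] (hP : SelfSimilar P) (α : Finset ℝ)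
    (h : α.Nonempty) (hc : α.card ≤ 3) : 55/9792 ≤ distortion P α := by
  obtain ⟨β, hαβ, hβ⟩ := Infinite.exists_superset_card_eq α 3 hc
  set e := β.orderEmbOfFin hβ
  have h01 : e 0 ≤ e 1 := e.monotone (by decide)
  have h12 : e 1 ≤ e 2 := e.monotone (by decide)
  refine (three P hP (e 0) (e 1) (e 2) h01 h12).trans ?_
  apply int_mono P hP (by fun_prop) (inf_cont α h)
  intro x _ _
  apply le_csInf
  · exact (Finset.coe_nonempty.2 h).image _
  · rintro _ ⟨y, hy, rfl⟩
    have hy' : y ∈ Set.range e := by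
      rw [Finset.range_orderEmbOfFin]; exact hαβ hy
    obtain ⟨i, rfl⟩ := hy'
    fin_cases i
    · exact min_le_left _ _
    · exact (min_le_right _ _).trans (min_le_left _ _)
    · exact (min_le_right _ _).trans (min_le_right _ _)

lemma sInf_le_pt (α : Finset ℝ) (x a : ℝ) (ha : a ∈ α) :
    sInf ((fun a => (x - a) ^ 2) '' (α : Set ℝ)) ≤ (x-a)^2 :=
  csInf_le ((α.finite_toSet.image _).bddBelow) ⟨a, ha, rfl⟩

lemma upper (P : Measure ℝ) [IsProbabilityMeasure P] (hP : SelfSimilar P) (α : Finset ℝ)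
    (h1 : 1/6 ∈ α) (h2 : 7/12 ∈ α) (h3 : 11/12 ∈ α) : distortion P α ≤ 55/9792 := by
  have hcont := inf_cont α ⟨_, h1⟩
  unfold distortion
  set F : ℝ → ℝ := fun x => sInf ((fun a => (x - a) ^ 2) '' (α : Set ℝ)) with hF
  have r1 := int_rec P hP hcont
  have r2 := int_rec P hP (f := fun x => F (x/2+1/2)) (by fun_prop)
  have u1 := int_mono P hP (f := fun x => F (x/4)) (g := fun x => (1/4*x+(-(1/6)))^2)
    (by fun_prop) (by fun_prop) (fun x _ _ => by
      have := sInf_le_pt α (x/4) _ h1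
      refine this.trans (le_of_eq (by ring)))
  have u2 := int_mono P hP (f := fun x => F (x/4/2+1/2)) (g := fun x => (1/8*x+(-(1/12)))^2)
    (by fun_prop) (by fun_prop) (fun x _ _ => by
      have := sInf_le_pt α (x/4/2+1/2) _ h2
      refine this.trans (le_of_eq (by ring)))
  have u3 := int_mono P hP (f := fun x => F ((x/2+1/2)/2+1/2)) (g := fun x => (1/4*x+(-(1/6)))^2)
    (by fun_prop) (by fun_prop) (fun x _ _ => by
      have := sInf_le_pt α ((x/2+1/2)/2+1/2) _ h3
      refine this.trans (le_of_eq (by ring)))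
  rw [aff P hP] at u1 u2 u3
  rw [r1, r2]
  norm_num at u1 u2 u3 ⊢
  linarith

theorem stmt_10 (P : Measure ℝ) [IsProbabilityMeasure P] (hP : SelfSimilar P) :
    IsOptimal P 3 ({1 / 6, 7 / 12, 11 / 12} : Finset ℝ) ∧
    qError P 3 = 55 / 9792 := by
  have h1 : (1/6:ℝ) ∈ ({1 / 6, 7 / 12, 11 / 12} : Finset ℝ) := by simp
  have h2 : (7/12:ℝ) ∈ ({1 / 6, 7 / 12, 11 / 12} : Finset ℝ) := by simp
  have h3 : (11/12:ℝ) ∈ ({1 / 6, 7 / 12, 11 / 12} : Finset ℝ) := by simp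
  have hcard : ({1 / 6, 7 / 12, 11 / 12} : Finset ℝ).card ≤ 3 := Finset.card_le_three
  have hd : distortion P ({1 / 6, 7 / 12, 11 / 12} : Finset ℝ) = 55/9792 :=
    le_antisymm (upper P hP _ h1 h2 h3) (lower P hP _ ⟨_, h1⟩ hcard)
  have hq : qError P 3 = 55/9792 := by
    apply IsLeast.csInf_eq
    refine ⟨⟨_, ⟨_, h1⟩, hcard, hd.symm⟩, ?_⟩
    rintro e ⟨α, hα, hc, rfl⟩
    exact lower P hP α hα hc
  exact ⟨⟨⟨_, h1⟩, hcard, hd.trans hq.symm⟩, hq⟩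
end
end

section
/- For any n ≥ 2, every optimal set α_n of n-means for P satisfies α_n ∩ J₁ ≠ ∅ and α_n ∩ J₂ ≠ ∅, where J₁ = [0, 1/4] and J₂ = [1/2, 1]. -/
open MeasureTheory Set
open scoped ENNReal Classical

noncomputable section

lemma cont_S1 : Continuous S1 := by unfold S1; fun_prop
lemma cont_S2 : Continuous S2 := by unfold S2; fun_prop

lemma ss_apply {P : Measure ℝ} (hP : SelfSimilar P) {s : Set ℝ} (hs : MeasurableSet s) :
    P s = (1/4 : ℝ≥0∞) * P (S1 ⁻¹' s) + (3/4 : ℝ≥0∞) * P (S2 ⁻¹' s) := by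
  conv_lhs => rw [hP]
  rw [Measure.add_apply, Measure.smul_apply, Measure.smul_apply,
    Measure.map_apply cont_S1.measurable hs, Measure.map_apply cont_S2.measurable hs]
  rfl

lemma quarter_sum : (1/4 : ℝ≥0∞) + 3/4 = 1 := by
  rw [ENNReal.div_add_div_same]
  norm_num
  exact ENNReal.div_self (by norm_num) (by norm_num)

/-- The set of points farther than `R` from `[0,1]`. -/
def tailSet (R : ℝ) : Set ℝ := {x | x < -R} ∪ {x | 1 + R < x}

lemma meas_tail (R : ℝ) : MeasurableSet (tailSet R) :=
  (measurableSet_lt measurable_id measurable_const).union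
    (measurableSet_lt measurable_const measurable_id)

lemma tail_le {P : Measure ℝ} (hP : SelfSimilar P) {R : ℝ} (hR : 0 ≤ R) :
    P (tailSet R) ≤ P (tailSet (2 * R)) := by
  have h1 : S1 ⁻¹' tailSet R ⊆ tailSet (2 * R) := by
    intro x hx
    simp only [tailSet, S1, mem_preimage, mem_union, mem_ofPred_eq] at hx ⊢
    rcases hx with h | h
    · left; linarith
    · right; linarith
  have h2 : S2 ⁻¹' tailSet R ⊆ tailSet (2 * R) := by
    intro x hx
    simp only [tailSet, S2, mem_preimage, mem_union, mem_ofPred_eq] at hx ⊢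
    rcases hx with h | h
    · left; linarith
    · right; linarith
  rw [ss_apply hP (meas_tail R)]
  calc _ ≤ (1/4 : ℝ≥0∞) * P (tailSet (2 * R)) + (3/4 : ℝ≥0∞) * P (tailSet (2 * R)) := by
        gcongr
    _ = P (tailSet (2 * R)) := by rw [← add_mul, quarter_sum, one_mul]

lemma tail_zero {P : Measure ℝ} [IsProbabilityMeasure P] (hP : SelfSimilar P) {R : ℝ}
    (hR : 0 < R) : P (tailSet R) = 0 := by
  have h1 : ∀ k : ℕ, P (tailSet R) ≤ P (tailSet (2 ^ k * R)) := by
    intro k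
    induction k with
    | zero => simp
    | succ k ih =>
      refine ih.trans ((tail_le hP (by positivity)).trans_eq ?_)
      congr 2; ring
  have hanti : Antitone (fun k : ℕ => tailSet (2 ^ k * R)) := by
    intro i j hij x hx
    have : (2:ℝ) ^ i * R ≤ 2 ^ j * R := by
      gcongr
      norm_num
    simp only [tailSet, mem_union, mem_ofPred_eq] at hx ⊢
    rcases hx with h | h
    · left; linarith
    · right; linarith
  have hlim := tendsto_measure_iInter_atTop (μ := P)
    (fun k => (meas_tail (2 ^ k * R)).nullMeasurableSet) hanti ⟨0, measure_ne_top _ _⟩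
  have hemp : (⋂ k : ℕ, tailSet (2 ^ k * R)) = ∅ := by
    ext x
    simp only [mem_iInter, mem_empty_iff_false, iff_false, not_forall]
    obtain ⟨k, hk⟩ := pow_unbounded_of_one_lt (|x| / R) (by norm_num : (1:ℝ) < 2)
    refine ⟨k, ?_⟩
    rw [div_lt_iff₀ hR] at hk
    simp only [tailSet, mem_union, mem_ofPred_eq]
    have := abs_lt.1 hk
    rintro (h | h) <;> linarith [this.1, this.2]
  rw [hemp, measure_empty] at hlim
  exact le_antisymm (ge_of_tendsto' hlim h1) zero_le

lemma ae_unit {P : Measure ℝ} [IsProbabilityMeasure P] (hP : SelfSimilar P) :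
    ∀ᵐ x ∂P, x ∈ Icc (0:ℝ) 1 := by
  have h : ∀ n : ℕ, ∀ᵐ x ∂P, x ∉ tailSet (1 / ((n:ℝ) + 1)) := by
    intro n
    exact measure_eq_zero_iff_ae_notMem.1 (tail_zero hP (by positivity))
  filter_upwards [ae_all_iff.2 h] with x hx
  simp only [tailSet, mem_union, mem_ofPred_eq, not_or, not_lt] at hx
  constructor
  · by_contra hc
    obtain ⟨n, hn⟩ := exists_nat_one_div_lt (show (0:ℝ) < -x by linarith)
    linarith [(hx n).1]
  · by_contra hc
    obtain ⟨n, hn⟩ := exists_nat_one_div_lt (show (0:ℝ) < x - 1 by linarith)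
    linarith [(hx n).2]

lemma integ {P : Measure ℝ} [IsProbabilityMeasure P] (hP : SelfSimilar P) {f : ℝ → ℝ}
    (hf : Continuous f) : Integrable f P := by
  have h : P.restrict (Icc (0:ℝ) 1) = P := Measure.restrict_eq_self_of_ae_mem (ae_unit hP)
  rw [← h]
  exact hf.continuousOn.integrableOn_compact isCompact_Icc

lemma ss_int {P : Measure ℝ} [IsProbabilityMeasure P] (hP : SelfSimilar P) {f : ℝ → ℝ}
    (hf : Continuous f) :
    ∫ x, f x ∂P = 1/4 * ∫ x, f (S1 x) ∂P + 3/4 * ∫ x, f (S2 x) ∂P := by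
  have i1 : Integrable f (P.map S1) := by
    rw [integrable_map_measure hf.aestronglyMeasurable cont_S1.measurable.aemeasurable]
    exact integ hP (hf.comp cont_S1)
  have i2 : Integrable f (P.map S2) := by
    rw [integrable_map_measure hf.aestronglyMeasurable cont_S2.measurable.aemeasurable]
    exact integ hP (hf.comp cont_S2)
  have e : ∫ x, f x ∂P
      = ∫ x, f x ∂((1/4 : ℝ≥0∞) • P.map S1 + (3/4 : ℝ≥0∞) • P.map S2) := by
    conv_lhs => rw [hP]
  rw [e, integral_add_measure (i1.smul_measure (ENNReal.div_ne_top (by norm_num) (by norm_num)))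
    (i2.smul_measure (ENNReal.div_ne_top (by norm_num) (by norm_num))),
    integral_smul_measure, integral_smul_measure,
    integral_map cont_S1.measurable.aemeasurable hf.aestronglyMeasurable,
    integral_map cont_S2.measurable.aemeasurable hf.aestronglyMeasurable]
  simp [ENNReal.toReal_div]

lemma mean_val {P : Measure ℝ} [IsProbabilityMeasure P] (hP : SelfSimilar P) :
    ∫ x, x ∂P = 2/3 := by
  have h := ss_int hP (f := fun x => x) continuous_id
  have i1 : Integrable (fun x : ℝ => x) P := integ hP continuous_id
  have e1 : ∫ x, S1 x ∂P = (∫ x, x ∂P) / 4 := by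
    unfold S1; rw [integral_div]
  have e2 : ∫ x, S2 x ∂P = (∫ x, x ∂P) / 2 + 1/2 := by
    unfold S2
    rw [integral_add (i1.div_const 2) (integrable_const _), integral_div]; simp
  rw [e1, e2] at h
  linarith

lemma quad_int {P : Measure ℝ} [IsProbabilityMeasure P] (hP : SelfSimilar P) (u v w : ℝ) :
    ∫ x, (u * x ^ 2 + v * x + w) ∂P = u * (∫ x, x ^ 2 ∂P) + v * (2/3) + w := by
  have i1 : Integrable (fun x : ℝ => v * x) P := integ hP (by fun_prop)
  have i2 : Integrable (fun x : ℝ => u * x ^ 2) P := integ hP (by fun_prop)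
  have i3 : Integrable (fun x : ℝ => u * x ^ 2 + v * x) P := integ hP (by fun_prop)
  rw [integral_add i3 (integrable_const _), integral_add i2 i1, integral_const_mul,
    integral_const_mul, mean_val hP]
  simp

lemma second_val {P : Measure ℝ} [IsProbabilityMeasure P] (hP : SelfSimilar P) :
    ∫ x, x ^ 2 ∂P = 28/51 := by
  have h := ss_int hP (f := fun x => x ^ 2) (by fun_prop)
  have e1 : ∫ x, (S1 x) ^ 2 ∂P = (1/16) * (∫ x, x ^ 2 ∂P) + 0 * (2/3) + 0 := by
    rw [← quad_int hP]; congr 1; ext x; unfold S1; ring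
  have e2 : ∫ x, (S2 x) ^ 2 ∂P = (1/4) * (∫ x, x ^ 2 ∂P) + (1/2) * (2/3) + 1/4 := by
    rw [← quad_int hP]; congr 1; ext x; unfold S2; ring
  rw [e1, e2] at h
  linarith

/-- Integral of `f` over a cylinder, in coordinates. -/
def cyl (P : Measure ℝ) (f : ℝ → ℝ) (s l : ℝ) : ℝ := ∫ x, f (s * x + l) ∂P

lemma cyl_top (P : Measure ℝ) (f : ℝ → ℝ) : ∫ x, f x ∂P = cyl P f 1 0 := by
  simp [cyl]

lemma cyl_split {P : Measure ℝ} [IsProbabilityMeasure P] (hP : SelfSimilar P) {f : ℝ → ℝ}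
    (hf : Continuous f) (s l : ℝ) :
    cyl P f s l = 1/4 * cyl P f (s/4) l + 3/4 * cyl P f (s/2) (l + s/2) := by
  unfold cyl
  rw [ss_int hP (f := fun x => f (s * x + l)) (by fun_prop)]
  congr 3
  · ext x; unfold S1; congr 1; ring
  · ext x; unfold S2; congr 1; ring

lemma cyl_quad {P : Measure ℝ} [IsProbabilityMeasure P] (hP : SelfSimilar P) (s l c : ℝ) :
    cyl P (fun y => (y - c) ^ 2) s l = s ^ 2 * (16/153) + (2/3 * s + l - c) ^ 2 := by
  have := quad_int hP (s ^ 2) (2 * s * (l - c)) ((l - c) ^ 2)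
  unfold cyl
  rw [second_val hP] at this
  rw [show (fun x : ℝ => (s * x + l - c) ^ 2)
    = fun x => s ^ 2 * x ^ 2 + 2 * s * (l - c) * x + (l - c) ^ 2 by ext x; ring, this]
  ring

lemma cyl_mono {P : Measure ℝ} [IsProbabilityMeasure P] (hP : SelfSimilar P) {f g : ℝ → ℝ}
    (hf : Continuous f) (hg : Continuous g) {s l : ℝ} (hs : 0 ≤ s)
    (h : ∀ y, l ≤ y → y ≤ s + l → f y ≤ g y) : cyl P f s l ≤ cyl P g s l := by
  unfold cyl
  refine integral_mono_ae (integ hP (by fun_prop)) (integ hP (by fun_prop)) ?_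
  filter_upwards [ae_unit hP] with x hx
  exact h _ (by nlinarith [hx.1]) (by nlinarith [hx.2])

lemma cyl_const {P : Measure ℝ} [IsProbabilityMeasure P] (s l c : ℝ) :
    cyl P (fun _ => c) s l = c := by
  simp [cyl]

lemma cyl_ge {P : Measure ℝ} [IsProbabilityMeasure P] (hP : SelfSimilar P) {g : ℝ → ℝ}
    (hg : Continuous g) (s l c : ℝ) (hs : 0 ≤ s)
    (h : ∀ y, l ≤ y → y ≤ s + l → (y - c) ^ 2 ≤ g y) :
    s ^ 2 * (16/153) + (2/3 * s + l - c) ^ 2 ≤ cyl P g s l := by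
  rw [← cyl_quad hP]
  exact cyl_mono hP (by fun_prop) hg hs h

lemma cyl_le {P : Measure ℝ} [IsProbabilityMeasure P] (hP : SelfSimilar P) {g : ℝ → ℝ}
    (hg : Continuous g) (s l c : ℝ) (hs : 0 ≤ s)
    (h : ∀ y, l ≤ y → y ≤ s + l → g y ≤ (y - c) ^ 2) :
    cyl P g s l ≤ s ^ 2 * (16/153) + (2/3 * s + l - c) ^ 2 := by
  rw [← cyl_quad hP]
  exact cyl_mono hP hg (by fun_prop) hs h

lemma cyl_const_le {P : Measure ℝ} [IsProbabilityMeasure P] (hP : SelfSimilar P) {g : ℝ → ℝ}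
    (hg : Continuous g) (s l c : ℝ) (hs : 0 ≤ s)
    (h : ∀ y, l ≤ y → y ≤ s + l → c ≤ g y) : c ≤ cyl P g s l := by
  rw [← cyl_const (P := P) s l c]
  exact cyl_mono hP continuous_const hg hs h

/-- Positivity at the left endpoint. -/
lemma pos_zero {P : Measure ℝ} [IsProbabilityMeasure P] (hP : SelfSimilar P) {g : ℝ → ℝ}
    (hg : Continuous g) (h0 : ∀ y, 0 ≤ y → y ≤ 1 → 0 ≤ g y) (hp : 0 < g 0) :
    0 < cyl P g 1 0 := by
  have key : ∀ k : ℕ, 0 ≤ cyl P g ((1/4) ^ k) 0 ∧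
      (0 < cyl P g ((1/4) ^ k) 0 → 0 < cyl P g 1 0) := by
    intro k
    have hk : ((1:ℝ)/4) ^ k ≤ 1 := pow_le_one₀ (by norm_num) (by norm_num)
    refine ⟨cyl_const_le hP hg _ _ _ (by positivity) fun y h1 h2 => h0 y h1 (by linarith), ?_⟩
    induction k with
    | zero => simp
    | succ k ih =>
      intro h
      have hk' : ((1:ℝ)/4) ^ k ≤ 1 := pow_le_one₀ (by norm_num) (by norm_num)
      have hk0 : (0:ℝ) ≤ (1/4) ^ k := by positivity
      apply ih hk'
      rw [cyl_split hP hg]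
      have : 0 ≤ cyl P g ((1/4) ^ k / 2) (0 + (1/4) ^ k / 2) :=
        cyl_const_le hP hg _ _ _ (by positivity) fun y h1 h2 =>
          h0 y (by linarith) (by linarith)
      rw [show ((1:ℝ)/4) ^ (k+1) = (1/4) ^ k / 4 by ring] at h
      linarith
  obtain ⟨δ, hδ, hball⟩ := Metric.continuousAt_iff.1 (hg.continuousAt (x := 0)) (g 0 / 2) (by linarith)
  obtain ⟨k, hk⟩ := exists_pow_lt_of_lt_one hδ (by norm_num : (1:ℝ)/4 < 1)
  apply (key k).2
  refine lt_of_lt_of_le (by linarith : 0 < g 0 / 2) ?_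
  refine cyl_const_le hP hg _ _ _ (by positivity) fun y h1 h2 => ?_
  have := hball (x := y) (by rw [Real.dist_eq, abs_lt]; constructor <;> linarith)
  rw [Real.dist_eq, abs_lt] at this
  linarith [this.1]

/-- Positivity at the right endpoint. -/
lemma pos_one {P : Measure ℝ} [IsProbabilityMeasure P] (hP : SelfSimilar P) {g : ℝ → ℝ}
    (hg : Continuous g) (h0 : ∀ y, 0 ≤ y → y ≤ 1 → 0 ≤ g y) (hp : 0 < g 1) :
    0 < cyl P g 1 0 := by
  have key : ∀ k : ℕ, (0 < cyl P g ((1/2) ^ k) (1 - (1/2) ^ k) → 0 < cyl P g 1 0) := by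
    intro k
    induction k with
    | zero => simp
    | succ k ih =>
      intro h
      have hk' : ((1:ℝ)/2) ^ k ≤ 1 := pow_le_one₀ (by norm_num) (by norm_num)
      have hk0 : (0:ℝ) ≤ (1/2) ^ k := by positivity
      apply ih
      rw [cyl_split hP hg]
      have : 0 ≤ cyl P g ((1/2) ^ k / 4) (1 - (1/2) ^ k) :=
        cyl_const_le hP hg _ _ _ (by positivity) fun y h1 h2 =>
          h0 y (by linarith) (by linarith)
      rw [show ((1:ℝ)/2) ^ (k+1) = (1/2) ^ k / 2 by ring,
        show 1 - ((1:ℝ)/2) ^ k / 2 = 1 - (1/2) ^ k + (1/2) ^ k / 2 by ring] at h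
      linarith
  obtain ⟨δ, hδ, hball⟩ := Metric.continuousAt_iff.1 (hg.continuousAt (x := 1)) (g 1 / 2) (by linarith)
  obtain ⟨k, hk⟩ := exists_pow_lt_of_lt_one hδ (by norm_num : (1:ℝ)/2 < 1)
  apply key k
  refine lt_of_lt_of_le (by linarith : 0 < g 1 / 2) ?_
  refine cyl_const_le hP hg _ _ _ (by positivity) fun y h1 h2 => ?_
  have := hball (x := y) (by rw [Real.dist_eq, abs_lt]; constructor <;> linarith)
  rw [Real.dist_eq, abs_lt] at this
  linarith [this.1]

set_option maxHeartbeats 1000000 in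
/-- Lower bound for two points with the left one beyond `1/4` and midpoint beyond `1/2`. -/
lemma two_bound {P : Measure ℝ} [IsProbabilityMeasure P] (hP : SelfSimilar P) (a b : ℝ)
    (ha : 1/4 < a) (hab : a < b) (hm : 1 < a + b) :
    13/612 < cyl P (fun x => min ((x - a) ^ 2) ((x - b) ^ 2)) 1 0 := by
  set f : ℝ → ℝ := fun x => min ((x - a) ^ 2) ((x - b) ^ 2) with hfdef
  have hf : Continuous f := by rw [hfdef]; fun_prop
  have leafA : ∀ s l : ℝ, 0 ≤ s → 2 * (s + l) ≤ a + b →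
      s ^ 2 * (16/153) + (2/3 * s + l - a) ^ 2 ≤ cyl P f s l := by
    intro s l hs h
    refine cyl_ge hP hf s l a hs fun y h1 h2 => le_min le_rfl ?_
    nlinarith
  have leafB : ∀ s l : ℝ, 0 ≤ s → a + b ≤ 2 * l →
      s ^ 2 * (16/153) + (2/3 * s + l - b) ^ 2 ≤ cyl P f s l := by
    intro s l hs h
    refine cyl_ge hP hf s l b hs fun y h1 h2 => le_min ?_ le_rfl
    nlinarith
  have leafC : ∀ s l : ℝ, 0 ≤ s → a ≤ l → s + l ≤ b →
      (l - a) ^ 2 ≤ cyl P f s l ∨ (b - (s + l)) ^ 2 ≤ cyl P f s l := by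
    intro s l hs h h'
    have : min ((l - a) ^ 2) ((b - (s + l)) ^ 2) ≤ cyl P f s l := by
      refine cyl_const_le hP hf s l _ hs fun y h1 h2 => min_le_min ?_ ?_
      · nlinarith
      · nlinarith
    exact min_le_iff.1 this
  have nn : ∀ s l : ℝ, 0 ≤ s → 0 ≤ cyl P f s l := by
    intro s l hs
    exact cyl_const_le hP hf s l _ hs fun y h1 h2 => le_min (sq_nonneg _) (sq_nonneg _)
  have e0 := cyl_split hP hf 1 0
  have e2 := cyl_split hP hf (1/2) (1/2)
  have e21 := cyl_split hP hf (1/8) (1/2)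
  have e212 := cyl_split hP hf (1/16) (9/16)
  have e22 := cyl_split hP hf (1/4) (3/4)
  have n211 := nn (1/32) (1/2) (by norm_num)
  have n212 := nn (1/16) (9/16) (by norm_num)
  have n21 := nn (1/8) (1/2) (by norm_num)
  have n22 := nn (1/4) (3/4) (by norm_num)
  have n2 := nn (1/2) (1/2) (by norm_num)
  have n221 := nn (1/16) (3/4) (by norm_num)
  have A1 := leafA (1/4) 0 (by norm_num) (by linarith)
  norm_num at e0 e2 e21 e212 e22 A1
  by_cases c0 : a ≤ 9/20
  swap
  · linarith [sq_nonneg (a - 9/20)]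
  by_cases c1 : b < 3/4
  · have B22 := leafB (1/4) (3/4) (by norm_num) (by linarith)
    norm_num at B22
    linarith [sq_nonneg (a - 1/4), sq_nonneg (b - 3/4)]
  push Not at c1
  by_cases c2 : b ≤ 13/16
  · have B22 := leafB (1/4) (3/4) (by norm_num) (by linarith)
    norm_num at B22
    by_cases c3 : a + b ≤ 9/8
    · have B212 := leafB (1/16) (9/16) (by norm_num) (by linarith)
      norm_num at B212
      rcases leafC (1/32) (1/2) (by norm_num) (by linarith) (by linarith) with C | C
      · norm_num at C
        linarith [sq_nonneg (a - 1/4), sq_nonneg (b - 13/16)]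
      · norm_num at C
        linarith [sq_nonneg (a - 1/4), sq_nonneg (b - 13/16)]
    · have A211 := leafA (1/32) (1/2) (by norm_num) (by linarith)
      norm_num at A211
      rcases leafC (1/16) (9/16) (by norm_num) (by linarith) (by linarith) with C | C
      · norm_num at C
        linarith [sq_nonneg (a - 5/16), sq_nonneg (b - 13/16)]
      · norm_num at C
        linarith [sq_nonneg (a - 5/16), sq_nonneg (b - 13/16)]
  push Not at c2
  have A211 := leafA (1/32) (1/2) (by norm_num) (by linarith)
  norm_num at A211
  by_cases c3 : a + b ≤ 9/8
  · have B22 := leafB (1/4) (3/4) (by norm_num) (by linarith)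
    have B212 := leafB (1/16) (9/16) (by norm_num) (by linarith)
    norm_num at B22 B212
    linarith [sq_nonneg (b - 41/48), sq_nonneg (a - 1/4)]
  push Not at c3
  by_cases c4 : a + b ≤ 19/16
  · have B22 := leafB (1/4) (3/4) (by norm_num) (by linarith)
    have B2122 := leafB (1/32) (19/32) (by norm_num) (by linarith)
    norm_num at B22 B2122
    rcases leafC (1/64) (9/16) (by norm_num) (by linarith) (by linarith) with C | C
    · norm_num at C
      linarith [sq_nonneg (b - 868/1000), sq_nonneg (a - 26/100)]
    · norm_num at C
      linarith [sq_nonneg (b - 855/1000), sq_nonneg (a - 1/4)]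
  push Not at c4
  have A2121 := leafA (1/64) (9/16) (by norm_num) (by linarith)
  norm_num at A2121
  by_cases c5 : a + b ≤ 3/2
  · have B22 := leafB (1/4) (3/4) (by norm_num) (by linarith)
    norm_num at B22
    rcases leafC (1/32) (19/32) (by norm_num) (by linarith) (by linarith) with C | C
    · norm_num at C
      linarith [sq_nonneg (a - 34/100), sq_nonneg (b - 11/12)]
    · norm_num at C
      linarith [sq_nonneg (b - 87/100), sq_nonneg (a - 26/100)]
  push Not at c5
  have A21 := leafA (1/8) (1/2) (by norm_num) (by linarith)
  have D222 := cyl_ge hP hf (1/8) (7/8) (21/20) (by norm_num) (by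
    intro y h1 h2
    refine le_min ?_ ?_ <;> nlinarith)
  norm_num at A21 D222
  linarith [sq_nonneg (a - 345/1000)]

/-- The integrand of the distortion. -/
def dmin (α : Finset ℝ) (x : ℝ) : ℝ := sInf ((fun a => (x - a) ^ 2) '' (α : Set ℝ))

lemma dmin_cont {α : Finset ℝ} (h : α.Nonempty) : Continuous (dmin α) := by
  have : dmin α = fun x => α.inf' h (fun a => (x - a) ^ 2) := by
    ext x
    rw [Finset.inf'_eq_csInf_image]
    rfl
  rw [this]
  exact Continuous.finset_inf'_apply h fun a _ => by fun_prop

lemma dmin_le {α : Finset ℝ} {a : ℝ} (h : a ∈ α) (x : ℝ) : dmin α x ≤ (x - a) ^ 2 := by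
  refine csInf_le ⟨0, ?_⟩ ⟨a, h, rfl⟩
  rintro _ ⟨b, _, rfl⟩
  exact sq_nonneg _

lemma le_dmin {α : Finset ℝ} (h : α.Nonempty) {x c : ℝ} (hc : ∀ a ∈ α, c ≤ (x - a) ^ 2) :
    c ≤ dmin α x := by
  refine le_csInf (by simpa using h) ?_
  rintro _ ⟨b, hb, rfl⟩
  exact hc b hb

lemma dist_eq (P : Measure ℝ) (α : Finset ℝ) : distortion P α = cyl P (dmin α) 1 0 := by
  rw [← cyl_top]; rfl

lemma opt_le {P : Measure ℝ} {n : ℕ} {α β : Finset ℝ} (hα : IsOptimal P n α)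
    (hβ : β.Nonempty) (hc : β.card ≤ n) : cyl P (dmin α) 1 0 ≤ cyl P (dmin β) 1 0 := by
  rw [← dist_eq, ← dist_eq, hα.2.2]
  refine csInf_le ⟨0, ?_⟩ ⟨β, hβ, hc, rfl⟩
  rintro _ ⟨γ, hγ, _, rfl⟩
  exact integral_nonneg fun x => le_dmin hγ fun a _ => sq_nonneg _

lemma opt_two {P : Measure ℝ} [IsProbabilityMeasure P] (hP : SelfSimilar P) {n : ℕ}
    (hn : 2 ≤ n) {α : Finset ℝ} (hα : IsOptimal P n α) : cyl P (dmin α) 1 0 ≤ 13/612 := by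
  have hne : ({1/6, 5/6} : Finset ℝ).Nonempty := by simp
  have h := opt_le hα hne (Finset.card_le_two.trans hn)
  have hc := dmin_cont hne
  have e0 := cyl_split hP hc 1 0
  have u1 := cyl_le hP hc (1/4) 0 (1/6) (by norm_num) fun y _ _ => dmin_le (by simp) y
  have u2 := cyl_le hP hc (1/2) (1/2) (5/6) (by norm_num) fun y _ _ => dmin_le (by simp) y
  norm_num at e0 u1 u2 h
  linarith

lemma opt_three {P : Measure ℝ} [IsProbabilityMeasure P] (hP : SelfSimilar P) {n : ℕ}
    (hn : 3 ≤ n) {α : Finset ℝ} (hα : IsOptimal P n α) :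
    cyl P (dmin α) 1 0 ≤ 16/153 * (55/1024) := by
  have hne : ({1/6, 7/12, 11/12} : Finset ℝ).Nonempty := by simp
  have h := opt_le hα hne (Finset.card_le_three.trans hn)
  have hc := dmin_cont hne
  have e0 := cyl_split hP hc 1 0
  have e2 := cyl_split hP hc (1/2) (1/2)
  have u1 := cyl_le hP hc (1/4) 0 (1/6) (by norm_num) fun y _ _ => dmin_le (by simp) y
  have u2 := cyl_le hP hc (1/8) (1/2) (7/12) (by norm_num) fun y _ _ => dmin_le (by simp) y
  have u3 := cyl_le hP hc (1/4) (3/4) (11/12) (by norm_num) fun y _ _ => dmin_le (by simp) y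
  norm_num at e0 e2 u1 u2 u3 h
  linarith

/-- Clamping the points of a set to `[0,1]` does not increase the integrand on `[0,1]`. -/
def clampSet (α : Finset ℝ) : Finset ℝ := α.image fun a => max 0 (min a 1)

lemma clamp_le {α : Finset ℝ} (h : α.Nonempty) {y : ℝ} (h0 : 0 ≤ y) (h1 : y ≤ 1) :
    dmin (clampSet α) y ≤ dmin α y := by
  refine le_dmin h fun a ha => ?_
  refine (dmin_le (Finset.mem_image_of_mem _ ha) y).trans ?_
  rcases le_total a 1 with k | k
  · rw [min_eq_left k]
    rcases le_total 0 a with j | j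
    · rw [max_eq_right j]
    · rw [max_eq_left j]; nlinarith
  · rw [min_eq_right k, max_eq_right zero_le_one]; nlinarith

lemma cyl_sub {P : Measure ℝ} [IsProbabilityMeasure P] (hP : SelfSimilar P) {f g : ℝ → ℝ}
    (hf : Continuous f) (hg : Continuous g) (s l : ℝ) :
    cyl P (fun x => f x - g x) s l = cyl P f s l - cyl P g s l := by
  unfold cyl
  exact integral_sub (integ hP (by fun_prop)) (integ hP (by fun_prop))

lemma no_clamp {P : Measure ℝ} [IsProbabilityMeasure P] (hP : SelfSimilar P) {n : ℕ}
    {α : Finset ℝ} (hα : IsOptimal P n α) :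
    dmin α 0 ≤ dmin (clampSet α) 0 ∧ dmin α 1 ≤ dmin (clampSet α) 1 := by
  have hne : (clampSet α).Nonempty := hα.1.image _
  have h := opt_le hα hne (Finset.card_image_le.trans hα.2.1)
  have c1 := dmin_cont hα.1
  have c2 := dmin_cont hne
  have hs := cyl_sub hP c1 c2 1 0
  constructor
  · by_contra hc
    have := pos_zero hP (c1.sub c2)
      (fun y h0 h1 => sub_nonneg.2 (clamp_le hα.1 h0 h1)) (by simpa using hc)
    change 0 < cyl P (fun x => dmin α x - dmin (clampSet α) x) 1 0 at this
    linarith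
  · by_contra hc
    have := pos_one hP (c1.sub c2)
      (fun y h0 h1 => sub_nonneg.2 (clamp_le hα.1 h0 h1)) (by simpa using hc)
    change 0 < cyl P (fun x => dmin α x - dmin (clampSet α) x) 1 0 at this
    linarith

lemma dmin_pos {α : Finset ℝ} (h : α.Nonempty) {x : ℝ} (hx : x ∉ α) : 0 < dmin α x := by
  have hm : dmin α x ∈ (fun a => (x - a) ^ 2) '' (α : Set ℝ) :=
    Set.Nonempty.csInf_mem (by simpa using h) (α.finite_toSet.image _)
  obtain ⟨a, ha, e⟩ := hm
  rw [← e]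
  have : x - a ≠ 0 := fun h0 => hx (by rw [sub_eq_zero.1 h0]; exact ha)
  positivity

lemma not_all_right {P : Measure ℝ} [IsProbabilityMeasure P] (hP : SelfSimilar P)
    {n : ℕ} (hn : 2 ≤ n) {α : Finset ℝ} (hα : IsOptimal P n α) (hall : ∀ a ∈ α, 1/4 < a) :
    False := by
  have c1 := dmin_cont hα.1
  set a := α.min' hα.1 with hadef
  have ha : a ∈ α := Finset.min'_mem _ _
  have hmin : ∀ b ∈ α, a ≤ b := fun b hb => Finset.min'_le _ _ hb
  have ha4 : 1/4 < a := hall a ha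
  have A1 := cyl_ge hP c1 (1/4) 0 a (by norm_num) (by
    intro y h1 h2
    refine le_dmin hα.1 fun b hb => ?_
    nlinarith [hmin b hb])
  have e0 := cyl_split hP c1 1 0
  by_cases hb : ∃ b ∈ α, b ≠ a ∧ b ≤ 1 - a
  · obtain ⟨b, hb, hba, hb1⟩ := hb
    have hab : a < b := lt_of_le_of_ne (hmin b hb) (Ne.symm hba)
    set β := insert (1/6) (α.erase a) with hβ
    have hβn : β.Nonempty := Finset.insert_nonempty _ _
    have hcard : β.card ≤ n := by
      refine (Finset.card_insert_le _ _).trans ?_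
      rw [Finset.card_erase_of_mem ha]
      have := Finset.card_pos.2 hα.1
      have := hα.2.1
      omega
    have h := opt_le hα hβn hcard
    have c2 := dmin_cont hβn
    have e0' := cyl_split hP c2 1 0
    have u1 := cyl_le hP c2 (1/4) 0 (1/6) (by norm_num)
      fun y _ _ => dmin_le (Finset.mem_insert_self _ _) y
    have u2 : cyl P (dmin β) (1/2) (1/2) ≤ cyl P (dmin α) (1/2) (1/2) := by
      refine cyl_mono hP c2 c1 (by norm_num) fun y h1 h2 => ?_
      refine le_dmin hα.1 fun c hc => ?_
      by_cases hca : c = a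
      · refine (dmin_le (Finset.mem_insert_of_mem (Finset.mem_erase.2 ⟨hba, hb⟩)) y).trans ?_
        rw [hca]; nlinarith
      · exact dmin_le (Finset.mem_insert_of_mem (Finset.mem_erase.2 ⟨hca, hc⟩)) y
    norm_num at e0 e0' u1 A1
    nlinarith
  push Not at hb
  by_cases hn3 : 3 ≤ n
  · have h3 := opt_three hP hn3 hα
    have n2 : 0 ≤ cyl P (dmin α) (1/2) (1/2) :=
      cyl_const_le hP c1 _ _ _ (by norm_num) fun y _ _ => le_dmin hα.1 fun _ _ => sq_nonneg _
    have n22 : 0 ≤ cyl P (dmin α) (1/4) (3/4) :=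
      cyl_const_le hP c1 _ _ _ (by norm_num) fun y _ _ => le_dmin hα.1 fun _ _ => sq_nonneg _
    have e2 := cyl_split hP c1 (1/2) (1/2)
    norm_num at e0 e2 A1
    have ha3 : a ≤ 3/10 := by
      by_contra hc
      push Not at hc
      linarith [sq_nonneg (a - 3/10)]
    have A21 := cyl_ge hP c1 (1/8) (1/2) (7/10) (by norm_num) (by
      intro y h1 h2
      refine le_dmin hα.1 fun b hbm => ?_
      by_cases hba : b = a
      · rw [hba]; nlinarith
      · have := hb b hbm hba
        nlinarith)
    norm_num at A21
    linarith [sq_nonneg (a - 1/4)]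
  · have hn2 : α.card ≤ 2 := by have := hα.2.1; omega
    have h2 := opt_two hP hn hα
    have hex : ∃ b, a < b ∧ 1 < a + b ∧ ∀ c ∈ α, c = a ∨ c = b := by
      by_cases hs : ∃ b ∈ α, b ≠ a
      · obtain ⟨b, hbm, hba⟩ := hs
        refine ⟨b, lt_of_le_of_ne (hmin b hbm) (Ne.symm hba), by linarith [hb b hbm hba], ?_⟩
        intro c hc
        by_contra hcc
        push Not at hcc
        have hsub : ({a, b, c} : Finset ℝ) ⊆ α := by
          intro z hz
          simp only [Finset.mem_insert, Finset.mem_singleton] at hz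
          rcases hz with rfl | rfl | rfl <;> assumption
        have := Finset.card_le_card hsub
        rw [Finset.card_eq_three.2 ⟨a, b, c, Ne.symm hba, Ne.symm hcc.1, Ne.symm hcc.2, rfl⟩]
          at this
        omega
      · push Not at hs
        exact ⟨a + 1, by linarith, by linarith, fun c hc => Or.inl (hs c hc)⟩
    obtain ⟨b, hab, hm, hc⟩ := hex
    have hlow := two_bound hP a b ha4 hab hm
    have := cyl_mono (s := 1) (l := 0) hP
      (f := fun x => min ((x - a) ^ 2) ((x - b) ^ 2)) (by fun_prop) c1 (by norm_num)
      (fun y _ _ => le_dmin hα.1 fun c hcm => by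
        rcases hc c hcm with rfl | rfl
        · exact min_le_left _ _
        · exact min_le_right _ _)
    linarith

lemma J_zero : J [0] = Icc 0 (1/4) := by
  ext x
  simp only [J, Sw, mem_image, mem_Icc, S1, S2, Function.comp, id]
  constructor
  · rintro ⟨y, ⟨h0, h1⟩, rfl⟩
    simp only [if_true, S1]
    constructor <;> linarith
  · rintro ⟨h0, h1⟩
    refine ⟨4 * x, ⟨by linarith, by linarith⟩, ?_⟩
    simp only [if_true, S1]
    ring

lemma J_one : J [1] = Icc (1/2) 1 := by
  have h10 : ¬ ((1 : Fin 2) = 0) := by decide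
  ext x
  simp only [J, Sw, mem_image, mem_Icc, Function.comp, id, h10, if_false]
  constructor
  · rintro ⟨y, ⟨h0, h1⟩, rfl⟩
    simp only [S2]
    constructor <;> linarith
  · rintro ⟨h0, h1⟩
    refine ⟨2 * x - 1, ⟨by linarith, by linarith⟩, ?_⟩
    simp only [S2]
    ring

theorem stmt_11 (P : Measure ℝ) [IsProbabilityMeasure P] (hP : SelfSimilar P)
    (n : ℕ) (hn : 2 ≤ n) (α : Finset ℝ) (hα : IsOptimal P n α) :
    ((α : Set ℝ) ∩ J [0]).Nonempty ∧ ((α : Set ℝ) ∩ J [1]).Nonempty := by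
  have hcl := no_clamp hP hα
  rw [J_zero, J_one]
  constructor
  · by_contra hc
    have hno : ∀ a ∈ α, ¬ (0 ≤ a ∧ a ≤ 1/4) := fun a ha h => hc ⟨a, ha, h⟩
    by_cases hneg : ∃ a ∈ α, a < 0
    · obtain ⟨a, ha, ha0⟩ := hneg
      have h1 : dmin (clampSet α) 0 ≤ (0 - 0) ^ 2 := by
        refine dmin_le (Finset.mem_image.2 ⟨a, ha, ?_⟩) 0
        rw [min_eq_left (by linarith), max_eq_left ha0.le]
      have h2 : 0 < dmin α 0 := dmin_pos hα.1 fun h => hno 0 h (by norm_num)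
      norm_num at h1
      linarith [hcl.1]
    · push Not at hneg
      refine not_all_right hP hn hα fun a ha => ?_
      by_contra h
      exact hno a ha ⟨hneg a ha, not_lt.1 h⟩
  · by_contra hc
    have hno : ∀ a ∈ α, ¬ (1/2 ≤ a ∧ a ≤ 1) := fun a ha h => hc ⟨a, ha, h⟩
    by_cases hbig : ∃ a ∈ α, 1 < a
    · obtain ⟨a, ha, ha0⟩ := hbig
      have h1 : dmin (clampSet α) 1 ≤ (1 - 1) ^ 2 := by
        refine dmin_le (Finset.mem_image.2 ⟨a, ha, ?_⟩) 1
        rw [min_eq_right ha0.le, max_eq_right zero_le_one]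
      have h2 : 0 < dmin α 1 := dmin_pos hα.1 fun h => hno 1 h (by norm_num)
      norm_num at h1
      linarith [hcl.2]
    · push Not at hbig
      have hl : ∀ a ∈ α, a < 1/2 := fun a ha => by
        by_contra h
        exact hno a ha ⟨not_lt.1 h, hbig a ha⟩
      have c1 := dmin_cont hα.1
      have h2 := opt_two hP hn hα
      have e0 := cyl_split hP c1 1 0
      have n1 : 0 ≤ cyl P (dmin α) (1/4) 0 :=
        cyl_const_le hP c1 _ _ _ (by norm_num) fun y _ _ => le_dmin hα.1 fun _ _ => sq_nonneg _
      have B2 := cyl_ge hP c1 (1/2) (1/2) (1/2) (by norm_num) (by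
        intro y h1 h2
        refine le_dmin hα.1 fun b hb => ?_
        nlinarith [hl b hb])
      norm_num at e0 B2 n1
      linarith
end
end
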